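/- Let d ≥ 1, let Ω ⊆ ℝ^d be an open convex neighborhood of 0, and let f_t : Ω → ℝ^d (t ∈ ℤ) be continuously differentiable maps such that (i) sup_{t∈ℤ} sup_{x∈B} |Df_t(x)| < ∞ for every bounded B ⊆ Ω, and (ii) for every ε > 0 there is δ > 0 such that |x₂ − x₁| < δ implies sup_{t∈ℤ} |Df_t(x₂) − Df_t(x₁)| < ε for all x₁, x₂ ∈ Ω. Then for any two sequences φ, φ* ∈ ℓ₀ with φ_t, φ*_t ∈ Ω for all t ∈ ℤ, the bounded linear operator on ℓ₀ given by ψ ↦ ((Df_t(φ_t) − Df_t(φ*_t)) ψ_t)_{t∈ℤ} is compact. -/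

import Mathlib

/-!
The operator is a diagonal (multiplication) operator with symbol `A_t = Df_t(φ_t) − Df_t(φ*_t)`.
Since `φ_t − φ*_t → 0`, equicontinuity of the derivatives, uniform in `t`, gives `‖A_t‖ → 0` as
`t → ±∞`, so `A` itself is an element of `C₀(ℤ, L(ℝ^d))` (`exists_symbol`). A diagonal operator
whose symbol tends to `0` is the operator-norm limit of its truncations to finite sets of indices
(`tendsto_trunc`), and each truncation is a finite sum of operators factoring through `ℝ^d`,
hence compact (`isCompactOperator_trunc`). Compact operators are closed under norm limits.
-/

open Filter Topology Bornology

noncomputable section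

/-- `ℓ₀`: the Banach space of sequences `ℤ → ℝ^d` with two-sided limit `0`,
equipped with the supremum norm. -/
abbrev lZero (d : ℕ) := ZeroAtInftyContinuousMap ℤ (EuclideanSpace ℝ (Fin d))

namespace DiagonalOperator

open ZeroAtInfty

variable {d : ℕ}

local notation "V" d => EuclideanSpace ℝ (Fin d)

lemma norm_apply_le {F : Type*} [NormedAddCommGroup F] (ψ : C₀(ℤ, F)) (t : ℤ) :
    ‖ψ t‖ ≤ ‖ψ‖ := by
  rw [← ZeroAtInftyContinuousMap.norm_toBCF_eq_norm]
  exact ψ.toBCF.norm_coe_le_norm t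

lemma norm_le_of_forall {F : Type*} [NormedAddCommGroup F] (ψ : C₀(ℤ, F)) {C : ℝ} (hC : 0 ≤ C)
    (h : ∀ t, ‖ψ t‖ ≤ C) : ‖ψ‖ ≤ C := by
  rw [← ZeroAtInftyContinuousMap.norm_toBCF_eq_norm]
  exact (BoundedContinuousFunction.norm_le hC).2 h

/-- The diagonal operator `ψ ↦ (A_t ψ_t)_t` on `ℓ₀` with symbol `A`, an operator-valued sequence
vanishing at infinity. -/
def diag (A : C₀(ℤ, (V d) →L[ℝ] (V d))) : lZero d →L[ℝ] lZero d :=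
  LinearMap.mkContinuous
    { toFun := fun ψ =>
        { toFun := fun t => A t (ψ t)
          continuous_toFun := continuous_of_discreteTopology
          zero_at_infty' := by
            refine squeeze_zero_norm (a := fun t => ‖A t‖ * ‖ψ‖) (fun t => ?_) ?_
            · exact ((A t).le_opNorm _).trans
                (mul_le_mul_of_nonneg_left (norm_apply_le ψ t) (norm_nonneg _))
            · simpa using (A.zero_at_infty'.norm.mul_const ‖ψ‖) }
      map_add' := fun ψ χ => by ext1 t; exact map_add (A t) _ _
      map_smul' := fun c ψ => by ext1 t; exact map_smul (A t) c _ }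
    ‖A‖ fun ψ => norm_le_of_forall _ (by positivity) fun t =>
      ((A t).le_opNorm _).trans
        (mul_le_mul (norm_apply_le A t) (norm_apply_le ψ t) (norm_nonneg _)
          ((norm_nonneg _).trans (norm_apply_le A t)))

lemma diag_apply (A : C₀(ℤ, (V d) →L[ℝ] (V d))) (ψ : lZero d) (t : ℤ) :
    diag A ψ t = A t (ψ t) := rfl

/-- Evaluation of a sequence at the index `t`. -/
def evalAt (d : ℕ) (t : ℤ) : lZero d →L[ℝ] V d :=
  LinearMap.mkContinuous
    { toFun := fun ψ => ψ t
      map_add' := fun _ _ => rfl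
      map_smul' := fun _ _ => rfl }
    1 fun ψ => by simpa using norm_apply_le ψ t

/-- The embedding of `ℝ^d` into `ℓ₀` as the sequences supported at the index `t`. -/
def singleAt (d : ℕ) (t : ℤ) : (V d) →L[ℝ] lZero d :=
  LinearMap.mkContinuous
    { toFun := fun v =>
        { toFun := fun u => if u = t then v else 0
          continuous_toFun := continuous_of_discreteTopology
          zero_at_infty' := by
            rw [Filter.cocompact_eq_cofinite]
            refine tendsto_const_nhds.congr' ?_
            filter_upwards [(Set.finite_singleton t).compl_mem_cofinite] with u hu
            exact (if_neg hu).symm }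
      map_add' := fun v w => by
        ext1 u
        change (if u = t then v + w else 0) = (if u = t then v else 0) + (if u = t then w else 0)
        split_ifs <;> simp
      map_smul' := fun c v => by
        ext1 u
        change (if u = t then c • v else 0) = c • (if u = t then v else 0)
        split_ifs <;> simp }
    1 fun v => norm_le_of_forall _ (by positivity) fun u => by
      change ‖if u = t then v else 0‖ ≤ 1 * ‖v‖
      split_ifs <;> simp

lemma singleAt_apply (t u : ℤ) (v : V d) :
    singleAt d t v u = if u = t then v else 0 := rfl

/-- The truncation of `diag A` to a finite set `s` of indices, written so that each summand
visibly factors through `ℝ^d`. -/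
def trunc (A : C₀(ℤ, (V d) →L[ℝ] (V d))) (s : Finset ℤ) : lZero d →L[ℝ] lZero d :=
  ∑ t ∈ s, (singleAt d t).comp ((A t).comp (evalAt d t))

lemma trunc_apply (A : C₀(ℤ, (V d) →L[ℝ] (V d))) (s : Finset ℤ) (ψ : lZero d) (u : ℤ) :
    trunc A s ψ u = if u ∈ s then A u (ψ u) else 0 := by
  change evalAt d u (trunc A s ψ) = _
  rw [trunc, sum_apply, map_sum]
  change ∑ t ∈ s, (if u = t then A t (ψ t) else 0) = _
  exact Finset.sum_ite_eq s u _

lemma isCompactOperator_trunc (A : C₀(ℤ, (V d) →L[ℝ] (V d))) (s : Finset ℤ) :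
    IsCompactOperator (trunc A s) := by
  refine Submodule.sum_mem (compactOperator (RingHom.id ℝ) (lZero d) (lZero d)) (t := s)
    (f := fun t => (singleAt d t).comp ((A t).comp (evalAt d t))) fun t _ => ?_
  exact (isCompactOperator_of_locallyCompactSpace_dom
    ((A t).comp (evalAt d t))).clm_comp (singleAt d t)

lemma tendsto_trunc (A : C₀(ℤ, (V d) →L[ℝ] (V d))) :
    Tendsto (trunc A) atTop (𝓝 (diag A)) := by
  refine (Metric.tendsto_atTop (α := lZero d →L[ℝ] lZero d)).2 fun ε hε => ?_
  have hA : Tendsto (fun t => ‖A t‖) cofinite (𝓝 0) := by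
    simpa [Filter.cocompact_eq_cofinite] using A.zero_at_infty'.norm
  -- Only finitely many indices carry a symbol of norm at least `ε / 2`.
  have hfin : {t | ¬ ‖A t‖ < ε / 2}.Finite := hA.eventually_lt_const (half_pos hε)
  refine ⟨hfin.toFinset, fun s hs => ?_⟩
  refine (dist_eq_norm (E := lZero d →L[ℝ] lZero d) _ _).trans_lt ?_
  refine lt_of_le_of_lt (ContinuousLinearMap.opNorm_le_bound _ (half_pos hε).le fun ψ => ?_)
    (half_lt_self hε)
  refine norm_le_of_forall _ (by positivity) fun t => ?_
  change ‖trunc A s ψ t - diag A ψ t‖ ≤ _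
  rw [trunc_apply, diag_apply]
  split_ifs with ht
  · simp only [sub_self, norm_zero]
    positivity
  · have hlt : ‖A t‖ < ε / 2 := by
      by_contra h
      exact ht (hs (hfin.mem_toFinset.2 h))
    rw [zero_sub, norm_neg]
    exact ((A t).le_opNorm _).trans
      (mul_le_mul hlt.le (norm_apply_le ψ t) (norm_nonneg _) (half_pos hε).le)

lemma isCompactOperator_diag (A : C₀(ℤ, (V d) →L[ℝ] (V d))) : IsCompactOperator (diag A) :=
  isCompactOperator_of_tendsto (tendsto_trunc A)
    (Eventually.of_forall (isCompactOperator_trunc A))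

/-- Equicontinuity of the family `Df_t` turns `φ_t − φ*_t → 0` into
`Df_t(φ_t) − Df_t(φ*_t) → 0`. -/
lemma exists_symbol (Ω : Set (V d)) (Df : ℤ → (V d) → ((V d) →L[ℝ] (V d)))
    (huc : ∀ ε > (0 : ℝ), ∃ δ > (0 : ℝ), ∀ x₁ ∈ Ω, ∀ x₂ ∈ Ω, ‖x₂ - x₁‖ < δ →
      ∀ t : ℤ, ‖Df t x₂ - Df t x₁‖ < ε)
    (φ φs : lZero d) (hφ : ∀ t : ℤ, φ t ∈ Ω) (hφs : ∀ t : ℤ, φs t ∈ Ω) :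
    ∃ A : C₀(ℤ, (V d) →L[ℝ] (V d)), ∀ t, A t = Df t (φ t) - Df t (φs t) := by
  refine ⟨⟨⟨fun t => Df t (φ t) - Df t (φs t), continuous_of_discreteTopology⟩, ?_⟩,
    fun _ => rfl⟩
  refine Metric.tendsto_nhds.2 fun ε hε => ?_
  obtain ⟨δ, hδ, h⟩ := huc ε hε
  have hlim : Tendsto (fun t => ‖φ t - φs t‖) (cocompact ℤ) (𝓝 0) := by
    simpa using (φ - φs).zero_at_infty'.norm
  filter_upwards [hlim.eventually_lt_const hδ] with t ht
  rw [dist_zero_right]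
  exact h _ (hφs t) _ (hφ t) ht t

end DiagonalOperator

/-- For `C¹` maps `f_t : Ω → ℝ^d` with uniformly bounded and uniformly (in `t`)
continuous derivatives, and any `φ, φ* ∈ ℓ₀` with values in `Ω`, the operator
`ψ ↦ ((Df_t(φ_t) − Df_t(φ*_t)) ψ_t)_t` on `ℓ₀` is a compact bounded linear operator. -/
theorem stmt_3 (d : ℕ) (hd : 1 ≤ d) (Ω : Set (EuclideanSpace ℝ (Fin d)))
    (hΩopen : IsOpen Ω) (hΩconv : Convex ℝ Ω) (hΩ0 : (0 : EuclideanSpace ℝ (Fin d)) ∈ Ω)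
    (f : ℤ → EuclideanSpace ℝ (Fin d) → EuclideanSpace ℝ (Fin d))
    (Df : ℤ → EuclideanSpace ℝ (Fin d) →
      (EuclideanSpace ℝ (Fin d) →L[ℝ] EuclideanSpace ℝ (Fin d)))
    (hderiv : ∀ t : ℤ, ∀ x ∈ Ω, HasFDerivAt (f t) (Df t x) x)
    (hcont : ∀ t : ℤ, ContinuousOn (Df t) Ω)
    (hbd : ∀ B : Set (EuclideanSpace ℝ (Fin d)), B ⊆ Ω → IsBounded B →
      ∃ M : ℝ, ∀ t : ℤ, ∀ x ∈ B, ‖Df t x‖ ≤ M)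
    (huc : ∀ ε > (0 : ℝ), ∃ δ > (0 : ℝ), ∀ x₁ ∈ Ω, ∀ x₂ ∈ Ω, ‖x₂ - x₁‖ < δ →
      ∀ t : ℤ, ‖Df t x₂ - Df t x₁‖ < ε)
    (φ φs : lZero d) (hφ : ∀ t : ℤ, φ t ∈ Ω) (hφs : ∀ t : ℤ, φs t ∈ Ω) :
    ∃ T : lZero d →L[ℝ] lZero d,
      (∀ ψ : lZero d, ∀ t : ℤ, (T ψ) t = (Df t (φ t) - Df t (φs t)) (ψ t)) ∧
      ∀ S : Set (lZero d), IsBounded S → IsCompact (closure (T '' S)) := by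
  obtain ⟨A, hA⟩ := DiagonalOperator.exists_symbol Ω Df huc φ φs hφ hφs
  refine ⟨DiagonalOperator.diag A, fun ψ t => ?_, fun S hS => ?_⟩
  · rw [DiagonalOperator.diag_apply, hA]
  · exact (DiagonalOperator.isCompactOperator_diag A).isCompact_closure_image_of_bounded
      (f := (DiagonalOperator.diag A : lZero d →ₗ[ℝ] lZero d)) hS
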